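/- The set 𝔸 of real numbers algebraic over ℚ is not contained in any finitely generated subfield of ℝ: for every finite subset s ⊆ ℝ, there exists a real number x that is algebraic over ℚ but does not lie in the subfield of ℝ generated by s. -/

import Mathlib

/-!
The algebraic closure `L` of a field `k` in a finitely generated extension `K` is finite over `k`:
a transcendence basis `x` of `K` over `k` stays algebraically independent over `L`, so `L` is
linearly disjoint from `k(x)`, and `[L : k] ≤ [K : k(x)] < ∞`. The real algebraic numbers, on the
other hand, have infinite degree over `ℚ`, since they contain a `p`-th root of `2`, of degree `p`,
for every prime `p`.
-/

open IntermediateField Module Polynomial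

section LinearDisjoint

theorem linearDisjoint_adjoin_range_of_algebraicIndependent {R S ι : Type*} [CommRing R]
    [CommRing S] [Algebra R S] {A : Subalgebra R S} [FaithfulSMul R A] {x : ι → S}
    (hx : AlgebraicIndependent A x) : A.LinearDisjoint (Algebra.adjoin R (Set.range x)) := by
  have hxR : AlgebraicIndependent R x :=
    hx.restrictScalars (FaithfulSMul.algebraMap_injective R A)
  have monomials_independent : LinearIndependent A
      fun m : ι →₀ ℕ ↦ MvPolynomial.aeval x (MvPolynomial.monomial m (1 : A)) := by
    simpa using! (MvPolynomial.basisMonomials ι A).linearIndependent.map'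
      (MvPolynomial.aeval x).toLinearMap (LinearMap.ker_eq_bot.2 hx)
  refine .of_basis_right _ _
    ((MvPolynomial.basisMonomials ι R).map hxR.aevalEquiv.toLinearEquiv) ?_
  convert! monomials_independent using 2 with m
  simp [MvPolynomial.aeval_monomial]

variable {k E : Type*} [Field k] [Field E] [Algebra k E] {A : IntermediateField k E}

open scoped algebraAdjoinAdjoin in
theorem linearDisjoint_adjoin_of_algebraAdjoin {s : Set E}
    (h : A.toSubalgebra.LinearDisjoint (Algebra.adjoin k s)) : A.LinearDisjoint (adjoin k s) :=
  .of_basis_left (Basis.ofVectorSpace k A) <|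
    (LinearIndependent.iff_fractionRing (Algebra.adjoin k s) (adjoin k s)).1 <|
      h.linearIndependent_left_of_flat (Basis.ofVectorSpace k A).linearIndependent

theorem finiteDimensional_of_linearDisjoint {L : Type*} [Field L] [Algebra k L] [Algebra L E]
    [IsScalarTower k L E] (h : A.LinearDisjoint L) [FiniteDimensional L E] :
    FiniteDimensional k A :=
  have := (h.linearIndependent_left (Basis.ofVectorSpace k A).linearIndependent).finite
  .of_basis (Basis.ofVectorSpace k A)

end LinearDisjoint

theorem finiteDimensional_algebraicClosure_of_essFiniteType (k K : Type*) [Field k] [Field K]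
    [Algebra k K] [Algebra.EssFiniteType k K] : FiniteDimensional k (algebraicClosure k K) := by
  obtain ⟨t, ht⟩ := exists_isTranscendenceBasis k K
  let F := adjoin k (Set.range ((↑) : t → K))
  have : Algebra.IsAlgebraic F K := ht.isAlgebraic_field
  have : Algebra.EssFiniteType F K := .of_comp k F K
  have : FiniteDimensional F K := Algebra.finite_of_essFiniteType_of_isAlgebraic
  have disjoint : (algebraicClosure k K).LinearDisjoint F :=
    linearDisjoint_adjoin_of_algebraAdjoin <|
      linearDisjoint_adjoin_range_of_algebraicIndependent ht.1.algebraicClosure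
  exact finiteDimensional_of_linearDisjoint disjoint

section PrimeRoots

variable {R K : Type*} [CommRing R] [IsIntegrallyClosed R] [Field K] [Algebra R K]
  [IsFractionRing R K] {a : R}

theorem irreducible_X_pow_sub_C_algebraMap (ha : Irreducible a) {p : ℕ} (hp : p.Prime) :
    Irreducible (X ^ p - C (algebraMap R K a)) := by
  refine X_pow_sub_C_irreducible_of_prime hp fun b hb ↦ ?_
  obtain ⟨r, rfl⟩ : ∃ r, algebraMap R K r = b :=
    IsIntegrallyClosed.exists_algebraMap_eq_of_isIntegral_pow hp.pos (hb ▸ isIntegral_algebraMap)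
  have hr : r ^ p = a := IsFractionRing.injective R K (by rw [map_pow, hb])
  exact not_irreducible_pow hp.ne_one (hr ▸ ha)

variable {E : Type*} [Field E] [Algebra R E] [Algebra K E] [IsScalarTower R K E]

theorem natDegree_minpoly_of_pow_eq_algebraMap (ha : Irreducible a) {p : ℕ} (hp : p.Prime) {x : E}
    (hx : x ^ p = algebraMap R E a) : (minpoly K x).natDegree = p := by
  rw [← minpoly.eq_of_irreducible_of_monic (irreducible_X_pow_sub_C_algebraMap ha hp)
    (by simp [hx, ← IsScalarTower.algebraMap_apply]) (monic_X_pow_sub_C _ hp.ne_zero),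
    natDegree_X_pow_sub_C]

theorem not_finiteDimensional_algebraicClosure_of_exists_pow_eq (ha : Irreducible a)
    (h : ∀ p : ℕ, p.Prime → ∃ x : E, x ^ p = algebraMap R E a) :
    ¬ FiniteDimensional K (algebraicClosure K E) := by
  intro _
  obtain ⟨p, hlt, hp⟩ := Nat.exists_infinite_primes (finrank K (algebraicClosure K E) + 1)
  obtain ⟨x, hx⟩ := h p hp
  have degree_eq : (minpoly K x).natDegree = p := natDegree_minpoly_of_pow_eq_algebraMap ha hp hx
  have x_algebraic : x ∈ algebraicClosure K E :=
    mem_algebraicClosure_iff'.2 <|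
      minpoly.ne_zero_iff.1 <| ne_zero_of_natDegree_gt (degree_eq ▸ hp.pos)
  have degree_le := minpoly.natDegree_le (A := K) (⟨x, x_algebraic⟩ : algebraicClosure K E)
  rw [IntermediateField.minpoly_eq, degree_eq] at degree_le
  omega

end PrimeRoots

theorem not_finiteDimensional_algebraicClosure_rat_real :
    ¬ FiniteDimensional ℚ (algebraicClosure ℚ ℝ) :=
  not_finiteDimensional_algebraicClosure_of_exists_pow_eq Int.prime_two.irreducible fun p hp ↦
    ⟨(2 : ℝ) ^ (p : ℝ)⁻¹, by simpa using Real.rpow_inv_natCast_pow zero_le_two hp.ne_zero⟩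

theorem stmt_10_general {k E : Type*} [Field k] [Field E] [Algebra k E]
    (h : ¬ FiniteDimensional k (algebraicClosure k E)) (s : Finset E) :
    ∃ x : E, IsAlgebraic k x ∧ x ∉ adjoin k (s : Set E) := by
  contrapose! h
  let K := adjoin k (s : Set E)
  have : Algebra.EssFiniteType k K := essFiniteType_iff.2 ⟨s, rfl⟩
  have := finiteDimensional_algebraicClosure_of_essFiniteType k K
  have le_map : (algebraicClosure k E).toSubalgebra.toSubmodule ≤
      (algebraicClosure k K).toSubalgebra.toSubmodule.map K.val.toLinearMap := fun x hx ↦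
    ⟨⟨x, h x (mem_algebraicClosure_iff.1 hx)⟩, (map_mem_algebraicClosure_iff K.val).1 hx, rfl⟩
  exact Submodule.finiteDimensional_of_le le_map

theorem stmt_10 (s : Finset ℝ) :
    ∃ x : ℝ, IsAlgebraic ℚ x ∧ x ∉ Subfield.closure (s : Set ℝ) := by
  obtain ⟨x, hx, hxs⟩ := stmt_10_general not_finiteDimensional_algebraicClosure_rat_real s
  exact ⟨x, hx, mt (Subfield.closure_le (t := (adjoin ℚ _).toSubfield).2 (subset_adjoin ℚ _) ·) hxs⟩
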